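/- arXiv:1506.04036 — 2 statements merged into one kernel-verified Lean document; each statement's English description precedes it below -/
import Mathlib

section
/- Let V ⊆ F_{q^m}^n and V' ⊆ F_{q^m}^{n'} be Galois closed F_{q^m}-linear subspaces and let φ : V → V' be an F_{q^m}-linear vector space isomorphism. The following conditions are equivalent: (1) for every c ∈ V with wt_R(c) = 1, one has wt_R(φ(c)) = 1; (2) wt_R(φ(c)) = wt_R(c) for all c ∈ V; (3) wt_R(φ(D)) = wt_R(D) for every F_{q^m}-linear subspace D ⊆ V; (4) for every Galois closed subspace U ⊆ F_{q^m}^n with U ⊆ V, the image φ(U) is a Galois closed subspace of F_{q^m}^{n'}; (5) there exist β ∈ F_{q^m} \ {0} and a matrix A with entries in F_q of size n × n' such that φ(c) = β c A for every c ∈ V. -/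
open Submodule Module

namespace RankPaper

variable {n : ℕ}

/-- The coordinatewise `q^i`-th power map on `Fqm^n`. -/
def qpowMap (q i : ℕ) {Fqm : Type} [Field Fqm] (v : Fin n → Fqm) : Fin n → Fqm :=
  fun j => v j ^ q ^ i

/-- The Galois closure `D* = Σ_{i=0}^{m-1} D^{q^i}` of a subspace (as the span of the
union of the images of `D` under the coordinatewise `q^i`-power maps, `0 ≤ i < m`). -/
def galClosure (q m : ℕ) {Fqm : Type} [Field Fqm] (D : Submodule Fqm (Fin n → Fqm)) :
    Submodule Fqm (Fin n → Fqm) :=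
  Submodule.span Fqm (⋃ i ∈ Finset.range m, qpowMap q i '' (D : Set (Fin n → Fqm)))

/-- `D` is Galois closed if `D = D*`. -/
def GaloisClosed (q m : ℕ) {Fqm : Type} [Field Fqm] (D : Submodule Fqm (Fin n → Fqm)) : Prop :=
  galClosure q m D = D

/-- Rank weight of a subspace: `wt_R(D) = dim_{Fqm} D*`. -/
noncomputable def wtR (q m : ℕ) {Fqm : Type} [Field Fqm]
    (D : Submodule Fqm (Fin n → Fqm)) : ℕ :=
  finrank Fqm (galClosure q m D)

/-- Rank weight of a vector: `wt_R(c) = wt_R(span {c})`. -/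
noncomputable def wtRv (q m : ℕ) {Fqm : Type} [Field Fqm] (c : Fin n → Fqm) : ℕ :=
  wtR q m (Submodule.span Fqm ({c} : Set (Fin n → Fqm)))

/-- Hamming weight of a subspace: the number of coordinates where some element is nonzero. -/
noncomputable def wtH {Fqm : Type} [Field Fqm] (D : Submodule Fqm (Fin n → Fqm)) : ℕ :=
  {i : Fin n | ∃ d ∈ D, d i ≠ 0}.ncard

/-- `r`-th generalized rank weight of a linear code. -/
noncomputable def dR (q m : ℕ) {Fqm : Type} [Field Fqm]
    (C : Submodule Fqm (Fin n → Fqm)) (r : ℕ) : ℕ :=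
  sInf { dv | ∃ V : Submodule Fqm (Fin n → Fqm),
    GaloisClosed q m V ∧ r ≤ finrank Fqm ↥(C ⊓ V) ∧ dv = finrank Fqm ↥V }

/-- `r`-th generalized Hamming weight of a linear code. -/
noncomputable def dH {Fqm : Type} [Field Fqm]
    (C : Submodule Fqm (Fin n → Fqm)) (r : ℕ) : ℕ :=
  sInf { w | ∃ D : Submodule Fqm (Fin n → Fqm), D ≤ C ∧ finrank Fqm ↥D = r ∧ w = wtH D }

/-- `r`-th relative generalized rank weight of a nested code pair. -/
noncomputable def MR (q m : ℕ) {Fqm : Type} [Field Fqm]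
    (C₁ C₂ : Submodule Fqm (Fin n → Fqm)) (r : ℕ) : ℕ :=
  sInf { dv | ∃ V : Submodule Fqm (Fin n → Fqm), GaloisClosed q m V ∧
    r ≤ finrank Fqm ↥(C₁ ⊓ V) - finrank Fqm ↥(C₂ ⊓ V) ∧ dv = finrank Fqm ↥V }

/-- Minimum rank distance of an arbitrary (possibly nonlinear) code. -/
noncomputable def dRset (q m : ℕ) {Fqm : Type} [Field Fqm] (C : Set (Fin n → Fqm)) : ℕ :=
  sInf { w | ∃ c₁ ∈ C, ∃ c₂ ∈ C, c₁ ≠ c₂ ∧ w = wtRv q m (c₁ - c₂) }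

/-- The linear functional `x ↦ Σ_j x_j y_j` (dot product with `y`). -/
def dotLin {K : Type} [Field K] (y : Fin n → K) : (Fin n → K) →ₗ[K] K :=
  ∑ j, y j • LinearMap.proj j

/-- Orthogonal complement of a subspace with respect to the standard bilinear form. -/
def perp {K : Type} [Field K] (L : Submodule K (Fin n → K)) : Submodule K (Fin n → K) :=
  ⨅ y ∈ L, LinearMap.ker (dotLin y)

/-- The coordinatewise inclusion `Fq^n → Fqm^n`. -/
def embFq (Fq Fqm : Type) [Field Fq] [Field Fqm] [Algebra Fq Fqm] :
    (Fin n → Fq) →ₗ[Fq] (Fin n → Fqm) :=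
  LinearMap.pi fun j => (Algebra.linearMap Fq Fqm).comp (LinearMap.proj j)

/-- `V_L = L ⊗ Fqm`, the `Fqm`-span of `L ⊆ Fq^n` inside `Fqm^n`. -/
def VL {Fq : Type} (Fqm : Type) [Field Fq] [Field Fqm] [Algebra Fq Fqm]
    (L : Submodule Fq (Fin n → Fq)) : Submodule Fqm (Fin n → Fqm) :=
  Submodule.span Fqm (embFq Fq Fqm '' (L : Set (Fin n → Fq)))

/-- Rank-punctured code `C^L`: the image of `C` in `Fqm^n / V_{L^⊥}`. -/
noncomputable def punct {Fq Fqm : Type} [Field Fq] [Field Fqm] [Algebra Fq Fqm]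
    (L : Submodule Fq (Fin n → Fq)) (C : Submodule Fqm (Fin n → Fqm)) :
    Submodule Fqm ((Fin n → Fqm) ⧸ VL Fqm (perp L)) :=
  Submodule.map (VL Fqm (perp L)).mkQ C

/-!
A vector has rank weight one exactly when it is a nonzero multiple of a vector over `F_q`, and the
trace shows that a Galois closed space is spanned by its vectors over `F_q`. So if an injective
linear map `f` preserves rank weight one, then for `w` over `F_q` in its domain `f w = γ_w • y_w`
with `y_w` over `F_q`. Comparing `f v`, `f w` and `f (v + w)` forces the ratio of `γ_v` and `γ_w`
into `F_q`, so one scalar `β` serves all `w`, and `β⁻¹ • f` is given by a matrix over `F_q`.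
Conversely such a matrix commutes with the Frobenius map, hence with Galois closure.
-/

section RestrictedMap

variable {K M N : Type*} [Semiring K] [AddCommMonoid M] [Module K M] [AddCommMonoid N] [Module K N]
  {V : Submodule K M}

theorem map_comap_subtype_span_singleton (f : V →ₗ[K] N) (c : V) :
    ((K ∙ (c : M)).comap V.subtype).map f = K ∙ f c := by
  have hspan : (K ∙ (c : M)).comap V.subtype = K ∙ c :=
    LinearMap.submoduleOf_span_singleton_of_mem V c.2
  rw [hspan, map_span, Set.image_singleton]

theorem finrank_map_comap_subtype {f : V →ₗ[K] N} (hf : Function.Injective f)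
    {U : Submodule K M} (hU : U ≤ V) :
    finrank K ((U.comap V.subtype).map f) = finrank K U :=
  (equivMapOfInjective f hf _).finrank_eq.symm.trans (comapSubtypeEquivOfLe hU).finrank_eq

end RestrictedMap

section GaloisClosure

variable {q m i : ℕ} {K : Type} [Field K] {D U : Submodule K (Fin n → K)}

theorem qpowMap_smul (q i : ℕ) (a : K) (v : Fin n → K) :
    qpowMap q i (a • v) = a ^ q ^ i • qpowMap q i v :=
  funext fun j => mul_pow a (v j) (q ^ i)

theorem qpowMap_mem_galClosure {u : Fin n → K} (hi : i < m) (hu : u ∈ D) :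
    qpowMap q i u ∈ galClosure q m D :=
  subset_span (Set.mem_biUnion (Finset.mem_coe.2 (Finset.mem_range.2 hi)) ⟨u, hu, rfl⟩)

theorem galClosure_le (h : ∀ i < m, ∀ u ∈ D, qpowMap q i u ∈ U) : galClosure q m D ≤ U := by
  simp only [galClosure, span_le, Set.iUnion_subset_iff, Set.image_subset_iff, Finset.mem_range]
  exact h

theorem galClosure_mono (h : D ≤ U) : galClosure q m D ≤ galClosure q m U :=
  galClosure_le fun _ hi _ hu => qpowMap_mem_galClosure hi (h hu)

theorem le_galClosure (hm : 0 < m) : D ≤ galClosure q m D := fun u hu => by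
  have hzero : qpowMap q 0 u = u := funext fun j => by rw [qpowMap, pow_zero, pow_one]
  exact hzero ▸ qpowMap_mem_galClosure hm hu

theorem GaloisClosed.qpowMap_mem (hU : GaloisClosed q m U) {u : Fin n → K} (hi : i < m)
    (hu : u ∈ U) : qpowMap q i u ∈ U :=
  hU.le (qpowMap_mem_galClosure hi hu)

theorem GaloisClosed.galClosure_le (hU : GaloisClosed q m U) (hD : D ≤ U) :
    galClosure q m D ≤ U :=
  (galClosure_mono hD).trans hU.le

theorem galClosure_bot (hq : q ≠ 0) : galClosure q m (⊥ : Submodule K (Fin n → K)) = ⊥ := by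
  refine le_bot_iff.1 (galClosure_le fun i _ u hu => ?_)
  obtain rfl := (mem_bot K).1 hu
  exact (mem_bot K).2 (funext fun _ => zero_pow (pow_ne_zero i hq))

theorem galoisClosed_iff_wtR_eq_finrank (hm : 0 < m) :
    GaloisClosed q m D ↔ wtR q m D = finrank K D :=
  ⟨fun h => congrArg (fun S : Submodule K (Fin n → K) => finrank K S) h,
    fun h => (eq_of_le_of_finrank_eq (le_galClosure hm) h.symm).symm⟩

theorem wtRv_eq_one_iff (hq : q ≠ 0) (hm : 0 < m) {c : Fin n → K} :
    wtRv q m c = 1 ↔ c ≠ 0 ∧ GaloisClosed q m (K ∙ c) := by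
  rcases eq_or_ne c 0 with rfl | hc
  · rw [wtRv, wtR, span_zero_singleton, galClosure_bot hq]
    simp
  · simp [galoisClosed_iff_wtR_eq_finrank hm, finrank_span_singleton hc, wtRv, hc]

end GaloisClosure

section Rational

variable {F L : Type} [Field F] [Field L] [Algebra F L]

theorem embFq_apply (y : Fin n → F) (j : Fin n) : embFq F L y j = algebraMap F L (y j) := rfl

theorem embFq_injective : Function.Injective (embFq (n := n) F L) := fun _ _ h =>
  funext fun j => (algebraMap F L).injective (congrFun h j)

theorem embFq_vecMul {n' : ℕ} (A : Matrix (Fin n) (Fin n') F) (v : Fin n → F) :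
    embFq F L (Matrix.vecMul v A) = Matrix.vecMul (embFq F L v) (A.map (algebraMap F L)) :=
  funext fun j => RingHom.map_vecMul (algebraMap F L) A v j

theorem mem_span_singleton_of_embFq_mem {v w : Fin n → F}
    (h : embFq F L w ∈ L ∙ embFq F L v) : w ∈ F ∙ v := by
  obtain ⟨a, ha⟩ := mem_span_singleton.1 h
  obtain ⟨π, hπ⟩ := (Algebra.linearMap F L).exists_leftInverse_of_injective
    (LinearMap.ker_eq_bot.2 (algebraMap F L).injective)
  have hπ_algebraMap (x : F) : π (algebraMap F L x) = x := LinearMap.congr_fun hπ x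
  refine mem_span_singleton.2 ⟨π a, funext fun j => ?_⟩
  calc π a * v j = π (v j • a) := by rw [map_smul, smul_eq_mul, mul_comm]
    _ = π (algebraMap F L (w j)) := by
      rw [Algebra.smul_def, mul_comm]; exact congrArg π (congrFun ha j)
    _ = w j := hπ_algebraMap (w j)

theorem sum_traceDual_smul_embFq_trace [FiniteDimensional F L] [Algebra.IsSeparable F L]
    {ι : Type*} [Fintype ι] [DecidableEq ι] (b : Basis ι F L) (u : Fin n → L) :
    ∑ i, b.traceDual i • embFq F L (fun j => Algebra.trace F L (u j * b i)) = u := by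
  ext j
  simp only [Finset.sum_apply, Pi.smul_apply, embFq_apply, smul_eq_mul]
  conv_rhs => rw [← b.traceDual.sum_repr (u j)]
  simp only [Basis.traceDual_repr_apply, Algebra.traceForm_apply, Algebra.smul_def, mul_comm]

variable (F) in
/-- The `F`-rational points of a subspace `U` of `L^n`, as a subspace of `F^n`. Descent recovers a
Galois closed `U` from it as `VL L (rationalPart F U)`. -/
def rationalPart (U : Submodule L (Fin n → L)) : Submodule F (Fin n → F) :=
  (U.restrictScalars F).comap (embFq F L)

variable (F) in
/-- A vector over `L` is projectively rational if it is a multiple of a vector with coordinates in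
`F`, that is, if it is zero or represents an `F`-rational point of projective space. Over
finite fields the nonzero ones are the vectors of rank weight one. -/
def IsProjRational (c : Fin n → L) : Prop := ∃ (a : L) (y : Fin n → F), c = a • embFq F L y

theorem IsProjRational.smul {c : Fin n → L} (hc : IsProjRational F c) (b : L) :
    IsProjRational F (b • c) := by
  obtain ⟨a, y, rfl⟩ := hc
  exact ⟨b * a, y, smul_smul b a _⟩

theorem isProjRational_zero : IsProjRational F (0 : Fin n → L) := ⟨0, 0, (zero_smul L _).symm⟩

theorem mem_span_singleton_of_parallel {ι : Type*} {x y z : ι → F} {i : ι} (hxi : x i ≠ 0)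
    (hzi : z i ≠ 0) (hxz : ∀ j, x j * z i - x i * z j = 0)
    (hyz : ∀ j, y i * z j - y j * z i = 0) : y ∈ F ∙ x := by
  refine mem_span_singleton.2 ⟨y i / x i, funext fun j => ?_⟩
  rw [Pi.smul_apply, smul_eq_mul, div_mul_eq_mul_div, div_eq_iff hxi]
  apply mul_right_cancel₀ hzi
  linear_combination x i * hyz j + y i * hxz j

theorem mem_range_embFq_or_mem_span_of_isProjRational_add {v w : Fin n → L}
    (hv : v ∈ LinearMap.range (embFq F L)) (hv0 : v ≠ 0) (hw : IsProjRational F w)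
    (hvw : IsProjRational F (v + w)) : w ∈ LinearMap.range (embFq F L) ∨ w ∈ L ∙ v := by
  obtain ⟨x, rfl⟩ := hv
  obtain ⟨c, y, rfl⟩ := hw
  obtain ⟨d, z, hz⟩ := hvw
  obtain ⟨i, hxi⟩ : ∃ i, x i ≠ 0 := by
    contrapose! hv0
    rw [show x = 0 from funext hv0, map_zero]
  have hcoord (j) : algebraMap F L (x j) + c * algebraMap F L (y j) = d * algebraMap F L (z j) :=
    congrFun hz j
  have hcross (j) : algebraMap F L (x j * z i - x i * z j) =
      c * algebraMap F L (y i * z j - y j * z i) := by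
    simp only [map_sub, map_mul]
    linear_combination algebraMap F L (z i) * hcoord j - algebraMap F L (z j) * hcoord i
  by_cases hyz : ∀ j, y i * z j - y j * z i = 0
  · have hxz (j) : x j * z i - x i * z j = 0 := by
      simpa only [hyz, map_zero, mul_zero, map_eq_zero] using hcross j
    right
    by_cases hzi : z i = 0
    · have hz0 : z = 0 := funext fun j => by simpa [hzi, hxi] using hxz j
      rw [hz0, map_zero, smul_zero] at hz
      rw [eq_neg_of_add_eq_zero_right hz]
      exact neg_mem (mem_span_singleton_self _)
    · obtain ⟨b, rfl⟩ := mem_span_singleton.1 (mem_span_singleton_of_parallel hxi hzi hxz hyz)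
      rw [map_smul]
      exact smul_mem _ c (smul_of_tower_mem _ b (mem_span_singleton_self _))
  · left
    obtain ⟨j, hj⟩ := not_forall.1 hyz
    have hc : c = algebraMap F L ((x j * z i - x i * z j) / (y i * z j - y j * z i)) := by
      rw [map_div₀, hcross j, mul_div_cancel_right₀ _ ((map_ne_zero _).2 hj)]
    rw [hc, algebraMap_smul]
    exact smul_mem _ _ (LinearMap.mem_range_self _ y)

theorem exists_smul_mem_range_embFq {W : Type*} [AddCommGroup W] [Module F W]
    (g : W →ₗ[F] (Fin n → L)) (hproj : ∀ w, IsProjRational F (g w))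
    (hline : ∀ v w, g w ∈ L ∙ g v → w ∈ F ∙ v) :
    ∃ β : L, β ≠ 0 ∧ ∀ w, β • g w ∈ LinearMap.range (embFq F L) := by
  by_cases hg : ∀ w, g w = 0
  · exact ⟨1, one_ne_zero, fun w => by simp [hg w]⟩
  obtain ⟨v, hv⟩ := not_forall.1 hg
  obtain ⟨a, x, hx⟩ := hproj v
  have ha : a ≠ 0 := by
    rintro rfl
    exact hv (hx.trans (zero_smul L _))
  have hv_rat : a⁻¹ • g v ∈ LinearMap.range (embFq F L) :=
    ⟨x, by rw [hx, inv_smul_smul₀ ha]⟩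
  refine ⟨a⁻¹, inv_ne_zero ha, fun w => ?_⟩
  have hvw : IsProjRational F (a⁻¹ • g v + a⁻¹ • g w) := by
    rw [← smul_add, ← map_add]
    exact (hproj (v + w)).smul a⁻¹
  rcases mem_range_embFq_or_mem_span_of_isProjRational_add hv_rat
    (smul_ne_zero (inv_ne_zero ha) hv) ((hproj w).smul a⁻¹) hvw with hrat | hspan
  · exact hrat
  · rw [span_singleton_smul_eq (inv_ne_zero ha).isUnit,
      Submodule.smul_mem_iff _ (inv_ne_zero ha)] at hspan
    obtain ⟨b, rfl⟩ := mem_span_singleton.1 (hline v w hspan)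
    rw [map_smul, smul_comm]
    exact smul_mem _ b hv_rat

theorem exists_vecMul_embFq_eq_of_mem_range {n' : ℕ} {W : Submodule F (Fin n → F)}
    {g : W →ₗ[F] (Fin n' → L)} (hg : ∀ w, g w ∈ LinearMap.range (embFq F L)) :
    ∃ A : Matrix (Fin n) (Fin n') F,
      ∀ w : W, Matrix.vecMul (embFq F L w) (A.map (algebraMap F L)) = g w := by
  obtain ⟨π, hπ⟩ := (embFq (n := n') F L).exists_leftInverse_of_injective
    (LinearMap.ker_eq_bot.2 embFq_injective)
  obtain ⟨T, hT⟩ := (π ∘ₗ g).exists_extend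
  refine ⟨LinearMap.toMatrixRight' T, fun w => ?_⟩
  have hvecMul : Matrix.vecMul w (LinearMap.toMatrixRight' T) = T w :=
    LinearMap.congr_fun (Matrix.toLinearMapRight'.apply_symm_apply T) w
  have hTw : T w = π (g w) := LinearMap.congr_fun hT w
  obtain ⟨y, hy⟩ := hg w
  have hπy : π (embFq F L y) = y := LinearMap.congr_fun hπ y
  rw [← embFq_vecMul, hvecMul, hTw, ← hy, hπy]

theorem exists_eq_smul_vecMul_of_isProjRational {n' : ℕ} {W : Submodule F (Fin n → F)}
    {f : (Fin n → L) →ₗ[L] (Fin n' → L)} (hf : Set.InjOn f (VL L W))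
    (hproj : ∀ w ∈ W, IsProjRational F (f (embFq F L w))) :
    ∃ β : L, β ≠ 0 ∧ ∃ A : Matrix (Fin n) (Fin n') F,
      ∀ c ∈ VL L W, f c = β • Matrix.vecMul c (A.map (algebraMap F L)) := by
  have hmem {w : Fin n → F} (hw : w ∈ W) : embFq F L w ∈ VL L W :=
    subset_span (Set.mem_image_of_mem _ hw)
  let g : W →ₗ[F] (Fin n' → L) := f.restrictScalars F ∘ₗ embFq F L ∘ₗ W.subtype
  have hline (v w : W) (h : g w ∈ L ∙ g v) : w ∈ F ∙ v := by
    obtain ⟨a, ha⟩ := mem_span_singleton.1 h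
    have hemb : a • embFq F L (v : Fin n → F) = embFq F L w :=
      hf (smul_mem _ a (hmem v.2)) (hmem w.2) ((map_smul f a _).trans ha)
    obtain ⟨b, hb⟩ := mem_span_singleton.1
      (mem_span_singleton_of_embFq_mem (mem_span_singleton.2 ⟨a, hemb⟩))
    exact mem_span_singleton.2 ⟨b, Subtype.ext hb⟩
  obtain ⟨β, hβ, hrat⟩ := exists_smul_mem_range_embFq g (fun w => hproj w w.2) hline
  obtain ⟨A, hA⟩ := exists_vecMul_embFq_eq_of_mem_range (g := β • g) hrat
  refine ⟨β⁻¹, inv_ne_zero hβ, A, fun c hc => ?_⟩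
  refine LinearMap.eqOn_span (g := β⁻¹ • (A.map (algebraMap F L)).vecMulLinear) ?_ hc
  rintro _ ⟨w, hw, rfl⟩
  rw [LinearMap.smul_apply, Matrix.vecMulLinear_apply, hA ⟨w, hw⟩, LinearMap.smul_apply,
    inv_smul_smul₀ hβ]
  rfl

end Rational

section Frobenius

variable {F L : Type} [Field F] [Field L] [Algebra F L]

theorem frobeniusAlgHom_pow_apply [Fintype F] (i : ℕ) (x : L) :
    (FiniteField.frobeniusAlgHom F L ^ i) x = x ^ Nat.card F ^ i := by
  rw [AlgHom.coe_pow, FiniteField.coe_frobeniusAlgHom, pow_iterate, Nat.card_eq_fintype_card]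

theorem qpowMap_embFq [Finite F] (i : ℕ) (y : Fin n → F) :
    qpowMap (Nat.card F) i (embFq F L y) = embFq F L y := by
  have := Fintype.ofFinite F
  ext j
  simp only [qpowMap, embFq_apply, ← frobeniusAlgHom_pow_apply, AlgHom.commutes]

theorem qpowMap_vecMul [Finite F] {n' : ℕ} (A : Matrix (Fin n) (Fin n') F) (i : ℕ)
    (v : Fin n → L) :
    qpowMap (Nat.card F) i (Matrix.vecMul v (A.map (algebraMap F L))) =
      Matrix.vecMul (qpowMap (Nat.card F) i v) (A.map (algebraMap F L)) := by
  have := Fintype.ofFinite F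
  ext j
  simp only [qpowMap, Matrix.vecMul, dotProduct, Matrix.map_apply, ← frobeniusAlgHom_pow_apply,
    map_sum, map_mul, AlgHom.commutes]

theorem galClosure_map_vecMulLinear [Finite F] {n' : ℕ} (m : ℕ) (A : Matrix (Fin n) (Fin n') F)
    (D : Submodule L (Fin n → L)) :
    galClosure (Nat.card F) m (D.map (A.map (algebraMap F L)).vecMulLinear) =
      (galClosure (Nat.card F) m D).map (A.map (algebraMap F L)).vecMulLinear := by
  simp only [galClosure, map_span, map_coe, Set.image_iUnion, Set.image_image,
    Matrix.vecMulLinear_apply, qpowMap_vecMul]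

theorem galoisClosed_span_singleton_embFq [Finite F] {m : ℕ} (hm : 0 < m) (y : Fin n → F) :
    GaloisClosed (Nat.card F) m (L ∙ embFq F L y) := by
  refine le_antisymm (galClosure_le fun i _ u hu => ?_) (le_galClosure hm)
  obtain ⟨a, rfl⟩ := mem_span_singleton.1 hu
  rw [qpowMap_smul, qpowMap_embFq]
  exact smul_mem _ _ (mem_span_singleton_self _)

variable [Finite L]

theorem embFq_trace_mem_of_galoisClosed {U : Submodule L (Fin n → L)}
    (hU : GaloisClosed (Nat.card F) (finrank F L) U) {u : Fin n → L} (hu : u ∈ U) :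
    embFq F L (fun j => Algebra.trace F L (u j)) ∈ U := by
  have hsum : embFq F L (fun j => Algebra.trace F L (u j)) =
      ∑ i ∈ Finset.range (finrank F L), qpowMap (Nat.card F) i u := by
    ext j
    rw [Finset.sum_apply]
    exact FiniteField.algebraMap_trace_eq_sum_pow F L (u j)
  rw [hsum]
  exact sum_mem fun i hi => hU.qpowMap_mem (Finset.mem_range.1 hi) hu

theorem VL_rationalPart_of_galoisClosed {U : Submodule L (Fin n → L)}
    (hU : GaloisClosed (Nat.card F) (finrank F L) U) : VL L (rationalPart F U) = U := by
  classical
  refine le_antisymm (span_le.2 (Set.image_subset_iff.2 fun _ hy => hy)) fun u hu => ?_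
  let b := finBasis F L
  rw [← sum_traceDual_smul_embFq_trace b u]
  refine sum_mem fun i _ => smul_mem _ _ (subset_span (Set.mem_image_of_mem _ ?_))
  have hbu : (fun j => u j * b i) ∈ U := by
    have hcomm : (fun j => u j * b i) = b i • u := funext fun j => mul_comm (u j) (b i)
    exact hcomm ▸ smul_mem U (b i) hu
  exact embFq_trace_mem_of_galoisClosed hU hbu

theorem galoisClosed_span_singleton_iff {c : Fin n → L} :
    GaloisClosed (Nat.card F) (finrank F L) (L ∙ c) ↔ IsProjRational F c := by
  have := Finite.of_injective _ (algebraMap F L).injective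
  constructor
  · intro hc
    rcases eq_or_ne c 0 with rfl | hc0
    · exact isProjRational_zero
    obtain ⟨y, hy, hy0⟩ : ∃ y ∈ rationalPart F (L ∙ c), embFq F L y ≠ 0 := by
      by_contra! hzero
      have hVL : VL L (rationalPart F (L ∙ c)) = ⊥ :=
        span_eq_bot.2 (Set.forall_mem_image.2 hzero)
      exact hc0 (span_singleton_eq_bot.1 ((VL_rationalPart_of_galoisClosed hc).symm.trans hVL))
    obtain ⟨b, hb⟩ := mem_span_singleton.1 hy
    have hb0 : b ≠ 0 := by
      rintro rfl
      exact hy0 (hb.symm.trans (zero_smul L c))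
    exact ⟨b⁻¹, y, by rw [← hb, inv_smul_smul₀ hb0]⟩
  · rintro ⟨a, y, rfl⟩
    rcases eq_or_ne a 0 with rfl | ha
    · simpa using galoisClosed_span_singleton_embFq (L := L) finrank_pos (0 : Fin n → F)
    · rw [span_singleton_smul_eq ha.isUnit]
      exact galoisClosed_span_singleton_embFq finrank_pos y

theorem wtRv_eq_one_iff_isProjRational {c : Fin n → L} :
    wtRv (Nat.card F) (finrank F L) c = 1 ↔ c ≠ 0 ∧ IsProjRational F c := by
  have := Finite.of_injective _ (algebraMap F L).injective
  rw [wtRv_eq_one_iff Nat.card_pos.ne' finrank_pos, galoisClosed_span_singleton_iff]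

end Frobenius

section RankIsometry

variable {F L : Type} [Field F] [Field L] [Algebra F L] {n' : ℕ}
  {V : Submodule L (Fin n → L)} {f : V →ₗ[L] (Fin n' → L)}

theorem wtR_map_eq_of_eq_smul_vecMul [Finite F] {m : ℕ}
    (hV : GaloisClosed (Nat.card F) m V) (hf : Function.Injective f) {β : L} (hβ : β ≠ 0)
    {A : Matrix (Fin n) (Fin n') F}
    (hA : ∀ c : V, f c = β • Matrix.vecMul (c : Fin n → L) (A.map (algebraMap F L)))
    {D : Submodule L (Fin n → L)} (hD : D ≤ V) :
    wtR (Nat.card F) m ((D.comap V.subtype).map f) = wtR (Nat.card F) m D := by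
  have hf_eq : f = β • ((A.map (algebraMap F L)).vecMulLinear ∘ₗ V.subtype) :=
    LinearMap.ext hA
  have hmap {U : Submodule L (Fin n → L)} (hU : U ≤ V) :
      (U.comap V.subtype).map f = U.map (A.map (algebraMap F L)).vecMulLinear := by
    rw [hf_eq, Submodule.map_smul _ _ _ hβ, map_comp, map_comap_subtype, inf_eq_right.2 hU]
  have hclosure := hV.galClosure_le hD
  rw [wtR, wtR, hmap hD, galClosure_map_vecMulLinear, ← hmap hclosure,
    finrank_map_comap_subtype hf hclosure]

theorem exists_eq_smul_vecMul_of_preserves_wtRv_one [Finite L]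
    (hV : GaloisClosed (Nat.card F) (finrank F L) V) (hf : Function.Injective f)
    (h : ∀ c : V, wtRv (Nat.card F) (finrank F L) (c : Fin n → L) = 1 →
      wtRv (Nat.card F) (finrank F L) (f c) = 1) :
    ∃ β : L, β ≠ 0 ∧ ∃ A : Matrix (Fin n) (Fin n') F,
      ∀ c : V, f c = β • Matrix.vecMul (c : Fin n → L) (A.map (algebraMap F L)) := by
  have hspan : VL L (rationalPart F V) = V := VL_rationalPart_of_galoisClosed hV
  obtain ⟨fExt, rfl⟩ := f.exists_extend
  have hinj : Set.InjOn fExt (VL L (rationalPart F V)) := by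
    rw [hspan]
    exact Set.injOn_iff_injective.2 hf
  have hproj : ∀ w ∈ rationalPart F V, IsProjRational F (fExt (embFq F L w)) := by
    intro w hw
    rcases eq_or_ne w 0 with rfl | hw0
    · simpa using isProjRational_zero
    have hw_wt : wtRv (Nat.card F) (finrank F L) (embFq F L w) = 1 :=
      wtRv_eq_one_iff_isProjRational.2
        ⟨(map_ne_zero_iff _ embFq_injective).2 hw0, 1, w, (one_smul L _).symm⟩
    exact (wtRv_eq_one_iff_isProjRational.1 (h ⟨embFq F L w, hw⟩ hw_wt)).2
  obtain ⟨β, hβ, A, hA⟩ := exists_eq_smul_vecMul_of_isProjRational hinj hproj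
  exact ⟨β, hβ, A, fun c => hA c (hspan.symm.le c.2)⟩

end RankIsometry

theorem stmt5_general {n' : ℕ} (Fq : Type) {Fqm : Type} [Field Fq] [Field Fqm] [Algebra Fq Fqm]
    [Finite Fqm] (V : Submodule Fqm (Fin n → Fqm))
    (hV : GaloisClosed (Nat.card Fq) (finrank Fq Fqm) V)
    (f : V →ₗ[Fqm] (Fin n' → Fqm)) (hf : Function.Injective f) :
    [ (∀ c : V, wtRv (Nat.card Fq) (finrank Fq Fqm) (c : Fin n → Fqm) = 1 →
        wtRv (Nat.card Fq) (finrank Fq Fqm) (f c) = 1),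
      (∀ c : V, wtRv (Nat.card Fq) (finrank Fq Fqm) (f c) =
        wtRv (Nat.card Fq) (finrank Fq Fqm) (c : Fin n → Fqm)),
      (∀ D : Submodule Fqm (Fin n → Fqm), D ≤ V →
        wtR (Nat.card Fq) (finrank Fq Fqm) ((D.comap V.subtype).map f) =
          wtR (Nat.card Fq) (finrank Fq Fqm) D),
      (∀ U : Submodule Fqm (Fin n → Fqm), U ≤ V →
        GaloisClosed (Nat.card Fq) (finrank Fq Fqm) U →
          GaloisClosed (Nat.card Fq) (finrank Fq Fqm) ((U.comap V.subtype).map f)),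
      (∃ β : Fqm, β ≠ 0 ∧ ∃ A : Matrix (Fin n) (Fin n') Fq,
        ∀ c : V, f c = β • Matrix.vecMul (c : Fin n → Fqm) (A.map (algebraMap Fq Fqm))) ].TFAE := by
  have := Finite.of_injective _ (algebraMap Fq Fqm).injective
  have hspan (c : V) : Fqm ∙ (c : Fin n → Fqm) ≤ V := (span_singleton_le_iff_mem _ _).2 c.2
  tfae_have 1 → 5 := exists_eq_smul_vecMul_of_preserves_wtRv_one hV hf
  tfae_have 5 → 3 := fun ⟨_, hβ, _, hA⟩ _ hD => wtR_map_eq_of_eq_smul_vecMul hV hf hβ hA hD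
  tfae_have 3 → 2 := fun h c => by
    simpa only [map_comap_subtype_span_singleton] using! h _ (hspan c)
  tfae_have 2 → 1 := fun h c hc => (h c).trans hc
  tfae_have 3 → 4 := fun h U hUV hU => by
    rw [galoisClosed_iff_wtR_eq_finrank finrank_pos] at hU ⊢
    rw [h U hUV, hU, finrank_map_comap_subtype hf hUV]
  tfae_have 4 → 1 := fun h c hc => by
    rw [wtRv_eq_one_iff Nat.card_pos.ne' finrank_pos] at hc ⊢
    refine ⟨(map_ne_zero_iff f hf).2 fun hc0 => hc.1 (congrArg Subtype.val hc0), ?_⟩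
    simpa only [map_comap_subtype_span_singleton] using h _ (hspan c) hc.2
  tfae_finish

/-- characterizations of rank-weight preserving isomorphisms between
Galois closed spaces (rank-metric equivalences). -/
theorem stmt5 (q m n n' : ℕ) (Fq Fqm : Type) [Field Fq] [Field Fqm] [Algebra Fq Fqm]
    [Finite Fqm] (hq : Nat.card Fq = q) (hm : finrank Fq Fqm = m)
    (V : Submodule Fqm (Fin n → Fqm)) (V' : Submodule Fqm (Fin n' → Fqm))
    (hV : GaloisClosed q m V) (hV' : GaloisClosed q m V')
    (φ : V ≃ₗ[Fqm] V') :
    [ -- (1) φ sends vectors of rank weight 1 to vectors of rank weight 1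
      (∀ c : V, wtRv q m (c : Fin n → Fqm) = 1 → wtRv q m ((φ c : Fin n' → Fqm)) = 1),
      -- (2) φ preserves rank weights of vectors
      (∀ c : V, wtRv q m ((φ c : Fin n' → Fqm)) = wtRv q m (c : Fin n → Fqm)),
      -- (3) φ preserves rank weights of all subspaces
      (∀ D : Submodule Fqm (Fin n → Fqm), D ≤ V →
        wtR q m (Submodule.map (V'.subtype.comp φ.toLinearMap) (D.comap V.subtype))
          = wtR q m D),
      -- (4) φ maps Galois closed subspaces of V to Galois closed subspaces
      (∀ U : Submodule Fqm (Fin n → Fqm), U ≤ V → GaloisClosed q m U →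
        GaloisClosed q m
          (Submodule.map (V'.subtype.comp φ.toLinearMap) (U.comap V.subtype))),
      -- (5) φ(c) = β • c A for a nonzero β ∈ Fqm and a matrix A over Fq
      (∃ β : Fqm, β ≠ 0 ∧ ∃ A : Matrix (Fin n) (Fin n') Fq,
        ∀ c : V, (φ c : Fin n' → Fqm)
          = β • Matrix.vecMul (c : Fin n → Fqm) (A.map (algebraMap Fq Fqm))) ].TFAE := by
  subst hq hm
  exact stmt5_general Fq V hV (V'.subtype ∘ₗ φ.toLinearMap)
    (V'.injective_subtype.comp φ.injective)

end RankPaper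
end

section
/- Let k ≤ n be a nonnegative integer. (i) If mk < n, then every F_{q^m}-linear code C ⊆ F_{q^m}^n of dimension k satisfies C* ≠ F_{q^m}^n (that is, C is rank degenerate). (ii) If mk ≥ n, then there exists an F_{q^m}-linear code C ⊆ F_{q^m}^n of dimension k with C* = F_{q^m}^n. -/
open Submodule Module

namespace RankPaper

variable {n : ℕ}

/-!
The map `v ↦ v^{q^i}` is semilinear over the `i`-th power of Frobenius, so if `k` vectors span `D`
then their `m * k` powers `v^{q^i}`, `i < m`, span `D*`; hence `dim D* ≤ m * dim D`.

Conversely, `Σ_{i<m} v^{q^i}` is the coordinatewise trace of `v`, so `D*` contains the trace of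
every vector of `D`. If `n ≤ m * k`, arrange the `n` coordinates injectively in an `m × k` grid
meeting every column, and let the `j`-th generator of the code carry a basis of `Fqm` over `Fq`
down the `j`-th column and vanish elsewhere. Multiplying a generator by an element of the
trace-dual basis and taking traces isolates a single coordinate, so `D*` contains all the standard
basis vectors.
-/

section Dimension

variable (Fq : Type) {Fqm : Type} [Field Fq] [Field Fqm] [Algebra Fq Fqm]

/-- The coordinatewise `q^i`-th power map, `q = #Fq`, as a map that is semilinear over the `i`-th
power of the Frobenius endomorphism; it makes the API of semilinear maps available for `qpowMap`. -/
def qpowSemilinearMap [Fintype Fq] (i : ℕ) :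
    (Fin n → Fqm) →ₛₗ[((FiniteField.frobeniusAlgHom Fq Fqm ^ i : Fqm →ₐ[Fq] Fqm) : Fqm →+* Fqm)]
      (Fin n → Fqm) where
  toFun v j := (FiniteField.frobeniusAlgHom Fq Fqm ^ i) (v j)
  map_add' v w := by ext; simp
  map_smul' a v := by ext; simp

lemma coe_qpowSemilinearMap [Fintype Fq] (i : ℕ) :
    ⇑(qpowSemilinearMap Fq i : (Fin n → Fqm) →ₛₗ[_] _) = qpowMap (Nat.card Fq) i := by
  ext v j
  change (FiniteField.frobeniusAlgHom Fq Fqm ^ i) (v j) = v j ^ Nat.card Fq ^ i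
  rw [AlgHom.coe_pow, FiniteField.coe_frobeniusAlgHom, pow_iterate, Fintype.card_eq_nat_card]

lemma qpowMap_image_span_subset [Finite Fq] (i : ℕ) (s : Set (Fin n → Fqm)) :
    qpowMap (Nat.card Fq) i '' (span Fqm s : Set (Fin n → Fqm)) ⊆
      span Fqm (qpowMap (Nat.card Fq) i '' s) := by
  have := Fintype.ofFinite Fq
  simpa only [coe_qpowSemilinearMap] using image_span_subset_span (qpowSemilinearMap Fq i) s

lemma galClosure_span_range_le [Finite Fq] {ι : Type*} (m : ℕ) (v : ι → Fin n → Fqm) :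
    galClosure (Nat.card Fq) m (span Fqm (Set.range v)) ≤
      span Fqm (Set.range fun p : Fin m × ι => qpowMap (Nat.card Fq) p.1 (v p.2)) := by
  refine span_le.2 (Set.iUnion₂_subset fun i hi => ?_)
  refine (qpowMap_image_span_subset Fq i _).trans (span_mono ?_)
  rintro _ ⟨_, ⟨j, rfl⟩, rfl⟩
  exact ⟨(⟨i, Finset.mem_range.1 hi⟩, j), rfl⟩

theorem finrank_galClosure_le [Finite Fq] (m : ℕ) (D : Submodule Fqm (Fin n → Fqm)) :
    finrank Fqm (galClosure (Nat.card Fq) m D) ≤ m * finrank Fqm D := by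
  let b := finBasis Fqm D
  let powers (p : Fin m × Fin (finrank Fqm D)) := qpowMap (Nat.card Fq) p.1 (b p.2 : Fin n → Fqm)
  have hspan : span Fqm (Set.range fun j => (b j : Fin n → Fqm)) = D := by
    rw [Set.range_comp' Subtype.val b, ← Submodule.coe_subtype, span_image, b.span_eq,
      map_subtype_top]
  calc finrank Fqm (galClosure (Nat.card Fq) m D)
      ≤ finrank Fqm (span Fqm (Set.range powers)) := by
        refine finrank_mono ?_
        simpa only [hspan] using galClosure_span_range_le Fq m fun j => (b j : Fin n → Fqm)
    _ ≤ Fintype.card (Fin m × Fin (finrank Fqm D)) := finrank_range_le_card powers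
    _ = m * finrank Fqm D := by simp only [Fintype.card_prod, Fintype.card_fin]

end Dimension

section Trace

variable (Fq : Type) {Fqm : Type} [Field Fq] [Field Fqm] [Algebra Fq Fqm] [Finite Fqm]

lemma algebraMap_trace_mem_galClosure {D : Submodule Fqm (Fin n → Fqm)} {v : Fin n → Fqm}
    (hv : v ∈ D) :
    (fun c => algebraMap Fq Fqm (Algebra.trace Fq Fqm (v c))) ∈
      galClosure (Nat.card Fq) (finrank Fq Fqm) D := by
  have trace_eq_sum : (fun c => algebraMap Fq Fqm (Algebra.trace Fq Fqm (v c))) =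
      ∑ i ∈ Finset.range (finrank Fq Fqm), qpowMap (Nat.card Fq) i v := by
    ext c
    simp only [FiniteField.algebraMap_trace_eq_sum_pow, Finset.sum_apply, qpowMap]
  rw [trace_eq_sum]
  exact sum_mem fun i hi => subset_span (Set.mem_biUnion hi (Set.mem_image_of_mem _ hv))

lemma galClosure_eq_top_of_forall_exists_trace_eq_ite {D : Submodule Fqm (Fin n → Fqm)}
    (hD : ∀ c, ∃ v ∈ D, ∀ c', Algebra.trace Fq Fqm (v c') = if c' = c then 1 else 0) :
    galClosure (Nat.card Fq) (finrank Fq Fqm) D = ⊤ := by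
  rw [eq_top_iff, ← (Pi.basisFun Fqm (Fin n)).span_eq, span_le]
  rintro _ ⟨c, rfl⟩
  obtain ⟨v, hv, htrace⟩ := hD c
  convert! algebraMap_trace_mem_galClosure Fq hv using 1
  ext c'
  simp only [htrace, Pi.basisFun_apply, Pi.single_apply, MonoidWithZeroHom.map_ite_one_zero]

end Trace

section GridVector

variable {ι κ η K : Type*} [DecidableEq κ]

/-- The `j`-th generator of the code associated with an arrangement `φ` of the coordinates in a
grid with rows `ι` and columns `κ`: it takes the value `a i` at a coordinate lying in row `i` of
column `j`, and vanishes outside column `j`. -/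
def gridVector [Zero K] (a : ι → K) (φ : η → ι × κ) (j : κ) : η → K :=
  fun c => if (φ c).2 = j then a (φ c).1 else 0

lemma linearIndependent_gridVector [Ring K] [IsDomain K] {a : ι → K} (ha : ∀ i, a i ≠ 0)
    {φ : η → ι × κ} (hφ : Function.Surjective fun c => (φ c).2) :
    LinearIndependent K (gridVector a φ) := by
  obtain ⟨s, hs⟩ := hφ.hasRightInverse
  refine .of_comp (LinearMap.funLeft K K s) ?_
  have restrict_eq_single : ⇑(LinearMap.funLeft K K s) ∘ gridVector a φ =
      fun j => Pi.single j (a (φ (s j)).1) := by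
    ext j j'
    have hcol : (φ (s j')).2 = j' := hs j'
    by_cases hj : j' = j
    · subst hj
      simp [gridVector, LinearMap.funLeft_apply, hcol]
    · simp [gridVector, LinearMap.funLeft_apply, hcol, hj]
  rw [restrict_eq_single]
  exact Pi.linearIndependent_single_of_ne_zero fun j => ha _

lemma trace_traceDual_mul_gridVector {F : Type*} [Field F] [Field K] [Algebra F K]
    [FiniteDimensional F K] [Algebra.IsSeparable F K] [Finite ι] [DecidableEq ι] [DecidableEq η]
    (a : Basis ι F K) {φ : η → ι × κ} (hφ : Function.Injective φ) (c c' : η) :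
    Algebra.trace F K (a.traceDual (φ c).1 * gridVector a φ (φ c).2 c') =
      if c' = c then 1 else 0 := by
  by_cases hcol : (φ c').2 = (φ c).2
  · have hrow : (φ c').1 = (φ c).1 ↔ c' = c := by
      rw [← hφ.eq_iff, Prod.ext_iff, and_iff_left hcol]
    simp only [gridVector, if_pos hcol, Basis.trace_traceDual_mul, hrow]
  · have hne : c' ≠ c := fun h => hcol (h ▸ rfl)
    simp only [gridVector, if_neg hcol, mul_zero, map_zero, if_neg hne]

end GridVector

theorem galClosure_span_gridVector_eq_top {Fq Fqm : Type} [Field Fq] [Field Fqm] [Algebra Fq Fqm]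
    [Finite Fqm] {ι κ : Type*} [DecidableEq κ] (a : Basis ι Fq Fqm)
    {φ : Fin n → ι × κ} (hφ : Function.Injective φ) :
    galClosure (Nat.card Fq) (finrank Fq Fqm) (span Fqm (Set.range (gridVector a φ))) = ⊤ := by
  classical
  have : Finite ι := Module.Finite.finite_basis a
  refine galClosure_eq_top_of_forall_exists_trace_eq_ite Fq fun c => ?_
  exact ⟨a.traceDual (φ c).1 • gridVector a φ (φ c).2,
    smul_mem _ _ (subset_span (Set.mem_range_self _)), trace_traceDual_mul_gridVector a hφ c⟩

lemma exists_injective_fin_prod_surjective_snd {m n k : ℕ} (hkn : k ≤ n) (hnmk : n ≤ m * k) :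
    ∃ φ : Fin n → Fin m × Fin k, Function.Injective φ ∧ Function.Surjective fun c => (φ c).2 := by
  refine ⟨fun c => finProdFinEquiv.symm (Fin.castLE hnmk c),
    finProdFinEquiv.symm.injective.comp (Fin.castLE_injective hnmk),
    fun j => ⟨Fin.castLE hkn j, Fin.ext ?_⟩⟩
  exact Nat.mod_eq_of_lt j.isLt

/-- (i) if `mk < n` then every `k`-dimensional code `C ⊆ Fqm^n` is rank
degenerate (`C* ≠ Fqm^n`); (ii) if `mk ≥ n` then some `k`-dimensional code satisfies
`C* = Fqm^n`. -/
theorem stmt8 (q m n k : ℕ) (Fq Fqm : Type) [Field Fq] [Field Fqm] [Algebra Fq Fqm]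
    [Finite Fqm] (hq : Nat.card Fq = q) (hm : finrank Fq Fqm = m) (hkn : k ≤ n) :
    (m * k < n → ∀ C : Submodule Fqm (Fin n → Fqm), finrank Fqm C = k →
      galClosure q m C ≠ ⊤) ∧
    (n ≤ m * k → ∃ C : Submodule Fqm (Fin n → Fqm), finrank Fqm C = k ∧
      galClosure q m C = ⊤) := by
  have : Finite Fq := Finite.of_injective _ (algebraMap Fq Fqm).injective
  subst hq hm
  constructor
  · rintro hlt C rfl htop
    have hdim := finrank_galClosure_le Fq (finrank Fq Fqm) C
    rw [htop, finrank_top, finrank_fin_fun] at hdim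
    exact hlt.not_ge hdim
  · intro hle
    obtain ⟨φ, hφ, hφ_snd⟩ := exists_injective_fin_prod_surjective_snd hkn hle
    let a := finBasis Fq Fqm
    have hindep : LinearIndependent Fqm (gridVector a φ) :=
      linearIndependent_gridVector a.ne_zero hφ_snd
    refine ⟨span Fqm (Set.range (gridVector a φ)), ?_, galClosure_span_gridVector_eq_top a hφ⟩
    rw [finrank_span_eq_card hindep, Fintype.card_fin]

end RankPaper
end
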